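/- arXiv:1706.00451 — 2 statements merged into one kernel-verified Lean document; each statement's English description precedes it below -/
import Mathlib

section
/- Let L ≥ 2 and let Q and R be polynomials with coefficients in {0,1}, with disjoint supports, both supported in degrees {0,…,L−1}. Let c = L − (card(supp Q) + card(supp R)) be the number of positions in {0,…,L−1} lying in neither support. If c ≥ 1 and Q − R is nonzero and is not a monomial, then m(Q−R) = ∫₀¹ log|(Q−R)(e^{2πik})| dk < (1/2)·log(L − c). -/
open Polynomial

noncomputable section

/-- `e k = exp(2πik)`. -/
def e (k : ℝ) : ℂ := Complex.exp (2 * Real.pi * Complex.I * k)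

/-!
By strict Jensen, `exp` of the average of `2 * log ‖P‖` over the unit circle is smaller than the
average of `‖P‖ ^ 2`, which is the sum of the squared moduli of the coefficients by Parseval, unless
`‖P‖` is almost everywhere equal to a constant `r` on the circle. In that case
`P * conjReciprocal P = r ^ 2 * X ^ deg P` with `r ≠ 0`, so `P` divides a power of `X` and is a
monomial.
-/

section ConstantModulus

theorem ne_zero_of_not_monomial {A : Type*} [Semiring A] {P : A[X]}
    (hP : ¬ ∃ (a : A) (n : ℕ), P = C a * X ^ n) : P ≠ 0 :=
  fun h => hP ⟨0, 0, by simp [h]⟩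

theorem exists_eq_C_mul_X_pow_of_dvd_X_pow {A : Type*} [CommRing A] [IsDomain A] {P : A[X]} {n : ℕ}
    (h : P ∣ X ^ n) : ∃ (a : A) (m : ℕ), P = C a * X ^ m := by
  obtain ⟨m, -, hPm⟩ := (dvd_prime_pow prime_X n).1 h
  obtain ⟨u, hu⟩ := hPm.symm
  obtain ⟨a, -, ha⟩ := isUnit_iff.1 u.isUnit
  exact ⟨a, m, by rw [← hu, ← ha, mul_comm]⟩

/-- The conjugate-reciprocal polynomial `z ^ deg P * conj (P (1 / conj z))`, whose coefficients are
those of `P` conjugated and read backwards; on the unit circle it plays the role of `conj P`. -/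
def conjReciprocal (P : ℂ[X]) : ℂ[X] := (P.map (starRingEnd ℂ)).reverse

theorem eval_conjReciprocal (P : ℂ[X]) {z : ℂ} (hz : ‖z‖ = 1) :
    (conjReciprocal P).eval z = starRingEnd ℂ (P.eval z) * z ^ P.natDegree := by
  have hz0 : z ≠ 0 := norm_ne_zero_iff.1 (hz ▸ one_ne_zero)
  let : Invertible (starRingEnd ℂ z) := invertibleOfNonzero (by simpa using hz0)
  have hinv : (starRingEnd ℂ z)⁻¹ = z := by rw [← Complex.inv_eq_conj hz, inv_inv]
  have hrev : (conjReciprocal P).eval z * starRingEnd ℂ z ^ P.natDegree =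
      starRingEnd ℂ (P.eval z) := by
    simpa [hinv, conjReciprocal, eval₂_id] using
      eval₂_reverse_mul_pow (RingHom.id ℂ) (starRingEnd ℂ z) (P.map (starRingEnd ℂ))
  rw [← hrev, mul_assoc, ← mul_pow, ← Complex.inv_eq_conj hz, inv_mul_cancel₀ hz0, one_pow, mul_one]

theorem finite_setOf_norm_eval_eq_of_not_monomial {P : ℂ[X]}
    (hP : ¬ ∃ (a : ℂ) (n : ℕ), P = C a * X ^ n) (r : ℝ) :
    {z : ℂ | ‖z‖ = 1 ∧ ‖P.eval z‖ = r}.Finite := by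
  have hP0 : P ≠ 0 := ne_zero_of_not_monomial hP
  by_contra hinf
  have hmul : P * conjReciprocal P = C ((r : ℂ) ^ 2) * X ^ P.natDegree := by
    refine eq_of_infinite_eval_eq _ _ (Set.Infinite.mono ?_ hinf)
    rintro z ⟨hz, rfl⟩
    simp [eval_conjReciprocal P hz, ← mul_assoc, Complex.mul_conj']
  have hr : IsUnit (C ((r : ℂ) ^ 2)) := by
    rw [isUnit_C, isUnit_iff_ne_zero]
    intro hr0
    simp [hr0, hP0, conjReciprocal] at hmul
  exact hP (exists_eq_C_mul_X_pow_of_dvd_X_pow (hr.dvd_mul_left.1 (Dvd.intro _ hmul)))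

end ConstantModulus

section Jensen

open MeasureTheory Real

theorem ae_eq_const_or_map_circleAverage_lt {E : Type*} [NormedAddCommGroup E] [NormedSpace ℝ E]
    [CompleteSpace E] {s : Set E} {g : E → ℝ} {f : ℂ → E} {c : ℂ} {r : ℝ}
    (hg : StrictConvexOn ℝ s g) (hgc : ContinuousOn g s) (hsc : IsClosed s)
    (hfs : ∀ᵐ θ ∂volume.restrict (Set.uIoc 0 (2 * π)), f (circleMap c r θ) ∈ s)
    (hf : CircleIntegrable f c r) (hgf : CircleIntegrable (fun z => g (f z)) c r) :
    (∀ᵐ θ ∂volume.restrict (Set.uIoc 0 (2 * π)), f (circleMap c r θ) = circleAverage f c r) ∨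
      g (circleAverage f c r) < circleAverage (fun z => g (f z)) c r := by
  simp only [circleAverage_eq_intervalAverage]
  have : IsFiniteMeasure (volume.restrict (Set.uIoc 0 (2 * π))) :=
    isFiniteMeasure_restrict.2 (by simp [Set.uIoc])
  exact hg.ae_eq_const_or_map_average_lt hgc hsc hfs hf.def' hgf.def'

theorem ae_circleMap_notMem_of_countable {s : Set ℂ} (hs : s.Countable) (c : ℂ) {r : ℝ}
    (hr : r ≠ 0) : ∀ᵐ θ : ℝ, circleMap c r θ ∉ s :=
  measure_eq_zero_iff_ae_notMem.1 ((hs.preimage_circleMap c hr).measure_zero volume)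

theorem ae_norm_eval_circleMap_pos {P : ℂ[X]} (hP : P ≠ 0) :
    ∀ᵐ θ : ℝ, 0 < ‖P.eval (circleMap 0 1 θ)‖ :=
  (ae_circleMap_notMem_of_countable (finite_setOfPred_isRoot hP).countable 0 one_ne_zero).mono
    fun _ hθ => norm_pos_iff.2 hθ

theorem ae_exp_two_mul_log_norm_eval_circleMap {P : ℂ[X]} (hP : P ≠ 0) :
    ∀ᵐ θ : ℝ, exp (2 * log ‖P.eval (circleMap 0 1 θ)‖) = ‖P.eval (circleMap 0 1 θ)‖ ^ 2 :=
  (ae_norm_eval_circleMap_pos hP).mono fun _ hθ => by rw [two_mul, exp_add, exp_log hθ, sq]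

theorem circleIntegrable_exp_two_mul_log_norm_eval {P : ℂ[X]} (hP : P ≠ 0) :
    CircleIntegrable (fun z => exp (2 * log ‖P.eval z‖)) 0 1 := by
  have hsq : CircleIntegrable (fun z => ‖P.eval z‖ ^ 2) 0 1 :=
    Continuous.intervalIntegrable (by fun_prop) _ _
  exact hsq.congr_ae
    (ae_restrict_of_ae ((ae_exp_two_mul_log_norm_eval_circleMap hP).mono fun _ hθ => hθ.symm))

theorem circleAverage_exp_two_mul_log_norm_eval {P : ℂ[X]} (hP : P ≠ 0) :
    circleAverage (fun z => exp (2 * log ‖P.eval z‖)) 0 1 = ∑ i ∈ P.support, ‖P.coeff i‖ ^ 2 := by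
  rw [P.sum_sq_norm_coeff_eq_circleAverage, circleAverage_def, circleAverage_def,
    intervalIntegral.integral_congr_ae
      ((ae_exp_two_mul_log_norm_eval_circleMap hP).mono fun _ hθ _ => hθ)]

theorem not_ae_log_norm_eval_circleMap_eq_const {P : ℂ[X]}
    (hP : ¬ ∃ (a : ℂ) (n : ℕ), P = C a * X ^ n) (t : ℝ) :
    ¬ ∀ᵐ θ ∂volume.restrict (Set.uIoc 0 (2 * π)), log ‖P.eval (circleMap 0 1 θ)‖ = t := by
  intro hconst
  have hP0 : P ≠ 0 := ne_zero_of_not_monomial hP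
  have hne := ae_circleMap_notMem_of_countable
    (finite_setOf_norm_eval_eq_of_not_monomial hP (exp t)).countable 0 one_ne_zero
  have : NeZero (volume.restrict (Set.uIoc 0 (2 * π))) := ⟨by simp [pi_ne_zero]⟩
  obtain ⟨θ, hθ, hθpos, hθne⟩ :=
    (hconst.and (ae_restrict_of_ae ((ae_norm_eval_circleMap_pos hP0).and hne))).exists
  exact hθne ⟨by simp, by rw [← hθ, exp_log hθpos]⟩

theorem logMahler_lt_half_log_of_coincidence_general {P : ℂ[X]}
    (hP : ¬ ∃ (a : ℂ) (n : ℕ), P = C a * X ^ n) :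
    P.logMahlerMeasure < 1 / 2 * log (∑ i ∈ P.support, ‖P.coeff i‖ ^ 2) := by
  have hP0 : P ≠ 0 := ne_zero_of_not_monomial hP
  have hlog_int : CircleIntegrable (fun z => 2 * log ‖P.eval z‖) 0 1 :=
    P.intervalIntegrable_mahlerMeasure.const_mul 2
  have hlog_avg : circleAverage (fun z => 2 * log ‖P.eval z‖) 0 1 = 2 * P.logMahlerMeasure :=
    circleAverage_fun_smul (a := (2 : ℝ))
  have hexp_lt : exp (2 * P.logMahlerMeasure) < ∑ i ∈ P.support, ‖P.coeff i‖ ^ 2 := by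
    rw [← hlog_avg, ← circleAverage_exp_two_mul_log_norm_eval hP0]
    refine (ae_eq_const_or_map_circleAverage_lt strictConvexOn_exp continuousOn_exp isClosed_univ
      (ae_of_all _ fun _ => Set.mem_univ _) hlog_int
      (circleIntegrable_exp_two_mul_log_norm_eval hP0)).resolve_left fun hconst => ?_
    exact not_ae_log_norm_eval_circleMap_eq_const hP P.logMahlerMeasure
      (hconst.mono fun _ hθ => by linarith)
  have hlog_lt : 2 * P.logMahlerMeasure < log (∑ i ∈ P.support, ‖P.coeff i‖ ^ 2) :=
    (lt_log_iff_exp_lt ((exp_pos _).trans hexp_lt)).2 hexp_lt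
  linarith

end Jensen

section CircleParametrization

theorem e_eq_circleMap (k : ℝ) : e k = circleMap 0 1 (2 * Real.pi * k) := by
  rw [e, circleMap_zero, Complex.ofReal_one, one_mul, Complex.ofReal_mul, Complex.ofReal_mul,
    Complex.ofReal_ofNat, mul_right_comm]

theorem circleAverage_zero_one_eq_integral_e {E : Type*} [NormedAddCommGroup E] [NormedSpace ℝ E]
    (f : ℂ → E) : Real.circleAverage f 0 1 = ∫ k in (0:ℝ)..1, f (e k) := by
  simp only [e_eq_circleMap]
  rw [intervalIntegral.integral_comp_mul_left (fun θ => f (circleMap 0 1 θ)) (by positivity),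
    mul_zero, mul_one, Real.circleAverage_def]

end CircleParametrization

section Coefficients

variable {A : Type*} [SeminormedRing A] {P Q : A[X]}

theorem sum_sq_norm_coeff_sub_of_disjoint (h : Disjoint P.support Q.support) :
    ∑ i ∈ (P - Q).support, ‖(P - Q).coeff i‖ ^ 2 =
      ∑ i ∈ P.support, ‖P.coeff i‖ ^ 2 + ∑ i ∈ Q.support, ‖Q.coeff i‖ ^ 2 := by
  classical
  have hsum : ∀ S : A[X], S.support ⊆ P.support ∪ Q.support →
      ∑ i ∈ S.support, ‖S.coeff i‖ ^ 2 = ∑ i ∈ P.support ∪ Q.support, ‖S.coeff i‖ ^ 2 :=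
    fun S hS => sum_eq_of_subset (fun _ a => ‖a‖ ^ 2) (by simp) hS
  have hsub : (P - Q).support ⊆ P.support ∪ Q.support := by
    simpa only [sub_eq_add_neg, support_neg] using support_add (p := P) (q := -Q)
  rw [hsum (P - Q) hsub, hsum P Finset.subset_union_left,
    hsum Q Finset.subset_union_right, ← Finset.sum_add_distrib]
  refine Finset.sum_congr rfl fun i _ => ?_
  by_cases hi : i ∈ P.support
  · simp [notMem_support_iff.1 (Finset.disjoint_left.1 h hi)]
  · simp [notMem_support_iff.1 hi]

theorem sum_sq_norm_coeff_of_zero_or_one [NormOneClass A]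
    (hP : ∀ n, P.coeff n = 0 ∨ P.coeff n = 1) :
    ∑ i ∈ P.support, ‖P.coeff i‖ ^ 2 = P.support.card := by
  have hone : ∀ i ∈ P.support, ‖P.coeff i‖ ^ 2 = 1 := fun i hi => by
    simp [(hP i).resolve_left (mem_support_iff.1 hi)]
  simp [Finset.sum_congr rfl hone]

end Coefficients

/-- Let `Q, R` be 0-1 polynomials with disjoint supports, both supported in
degrees `{0,…,L-1}` with `L ≥ 2`, and let `c = L - (card(supp Q) + card(supp R))` be the number
of positions in `{0,…,L-1}` lying in neither support. If `c ≥ 1` and `Q - R` is nonzero and not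
a monomial, then `m(Q - R) < (1/2)·log(L - c)`. -/
theorem logMahler_lt_half_log_of_coincidence
    (L : ℕ) (hL : 2 ≤ L) (Q R : Polynomial ℂ)
    (hQ01 : ∀ n : ℕ, Q.coeff n = 0 ∨ Q.coeff n = 1)
    (hR01 : ∀ n : ℕ, R.coeff n = 0 ∨ R.coeff n = 1)
    (hdisj : Disjoint Q.support R.support)
    (hQdeg : Q.support ⊆ Finset.range L)
    (hRdeg : R.support ⊆ Finset.range L)
    (c : ℕ) (hc : c = L - (Q.support.card + R.support.card)) (hc1 : 1 ≤ c)
    (hQR : Q - R ≠ 0)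
    (hmono : ¬ ∃ (a : ℂ) (n : ℕ), Q - R = Polynomial.C a * Polynomial.X ^ n) :
    (∫ k in (0:ℝ)..1, Real.log ‖(Q - R).eval (e k)‖) <
      (1 / 2 : ℝ) * Real.log ((L : ℝ) - (c : ℝ)) := by
  have hcard : (L : ℝ) - c = Q.support.card + R.support.card := by
    rw [sub_eq_iff_eq_add]
    norm_cast
    omega
  rw [← circleAverage_zero_one_eq_integral_e (fun z => Real.log ‖(Q - R).eval z‖), hcard,
    ← sum_sq_norm_coeff_of_zero_or_one hQ01, ← sum_sq_norm_coeff_of_zero_or_one hR01,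
    ← sum_sq_norm_coeff_sub_of_disjoint hdisj]
  exact logMahler_lt_half_log_of_coincidence_general hmono
end
end

section
/- Let D(k) = [[1, 1],[e^{2πik}, −e^{2πik}]] be the invertible block of the Fourier matrix of the Rudin–Shapiro substitution. Then (1/√2)·D(k) is unitary for every k ∈ ℝ, i.e., ‖D(k)v‖ = √2·‖v‖ for all v ∈ ℂ²; consequently, for every k ∈ ℝ, every n ≥ 1 and every v ∈ ℂ², ‖D(2^{n−1}k)·D(2^{n−2}k)···D(k)·v‖ = 2^{n/2}·‖v‖, so both Lyapunov exponents of the associated outward cocycle vanish: for every nonzero v, lim_{n→∞} (1/n)·log‖2^{n/2}·(D(2^{n−1}k)···D(k))^{−1} v‖ = 0. -/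
/-!
Since `‖e^{2πik}‖ = 1`, the columns of `D(k)` are orthogonal vectors of norm `√2`, so
`(1/√2) • D(k)` is unitary. Unitary matrices form a group, so the product of `n` blocks
and its inverse are unitary once rescaled by `2^{-n/2}` and `2^{n/2}`. The norms entering the
Lyapunov exponents therefore do not depend on `n`, and dividing their logarithm by `n` gives `0`
in the limit.
-/

open Filter

noncomputable section

/-- The invertible block `D(k) = [[1, 1],[e^{2πik}, -e^{2πik}]]` of the Fourier matrix of the
Rudin–Shapiro substitution. -/
def RSblock (k : ℝ) : Matrix (Fin 2) (Fin 2) ℂ := !![1, 1; e k, -(e k)]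

/-- The outward product `D(2^{n-1}k) · D(2^{n-2}k) ⋯ D(k)`. -/
def RSprod (k : ℝ) (n : ℕ) : Matrix (Fin 2) (Fin 2) ℂ :=
  (((List.range n).map fun m => RSblock ((2 : ℝ) ^ m * k)).reverse).prod

theorem pow_length_smul_list_prod_mem {R M : Type*} [Monoid R] [Monoid M] [MulAction R M]
    [IsScalarTower R M M] [SMulCommClass R M M] (S : Submonoid M) (c : R) (l : List M)
    (hl : ∀ x ∈ l, c • x ∈ S) : c ^ l.length • l.prod ∈ S := by
  rw [List.smul_prod]
  exact S.list_prod_mem (List.forall_mem_map.mpr hl)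

theorem smul_inv_mem_unitaryGroup {K ι : Type*} [Field K] [StarRing K] [Fintype ι] [DecidableEq ι]
    {c : K} {A : Matrix ι ι K} (hc : c ≠ 0) (hA : c⁻¹ • A ∈ Matrix.unitaryGroup ι K) :
    c • A⁻¹ ∈ Matrix.unitaryGroup ι K := by
  have inv_eq : A⁻¹ = c⁻¹ • star (c⁻¹ • A) := Matrix.inv_eq_left_inv <| by
    rw [smul_mul_assoc, ← mul_smul_comm, Unitary.star_mul_self_of_mem hA]
  rw [inv_eq, smul_inv_smul₀ hc]
  exact Unitary.star_mem hA

section EuclideanNorm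

variable {𝕜 ι : Type*} [RCLike 𝕜] [Fintype ι] [DecidableEq ι]

theorem norm_toEuclideanCLM_of_mem_unitaryGroup {U : Matrix ι ι 𝕜}
    (hU : U ∈ Matrix.unitaryGroup ι 𝕜) (v : EuclideanSpace 𝕜 ι) :
    ‖Matrix.toEuclideanCLM (𝕜 := 𝕜) U v‖ = ‖v‖ :=
  ContinuousLinearMap.norm_map_of_mem_unitary (Unitary.map_mem Matrix.toEuclideanCLM hU) v

theorem norm_toEuclideanCLM_of_inv_smul_mem_unitaryGroup {c : 𝕜} {A : Matrix ι ι 𝕜} (hc : c ≠ 0)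
    (hA : c⁻¹ • A ∈ Matrix.unitaryGroup ι 𝕜) (v : EuclideanSpace 𝕜 ι) :
    ‖Matrix.toEuclideanCLM (𝕜 := 𝕜) A v‖ = ‖c‖ * ‖v‖ := by
  rw [← norm_toEuclideanCLM_of_mem_unitaryGroup hA v, map_smul, smul_apply, ← norm_smul,
    smul_inv_smul₀ hc]

theorem tendsto_one_div_mul_log_norm_of_mem_unitaryGroup {U : ℕ → Matrix ι ι 𝕜}
    (hU : ∀ n, U n ∈ Matrix.unitaryGroup ι 𝕜) (v : EuclideanSpace 𝕜 ι) :
    Tendsto (fun n : ℕ => (1 / n : ℝ) * Real.log ‖Matrix.toEuclideanCLM (𝕜 := 𝕜) (U n) v‖)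
      atTop (nhds 0) := by
  simp only [norm_toEuclideanCLM_of_mem_unitaryGroup (hU _)]
  simpa only [zero_mul] using
    (tendsto_one_div_atTop_nhds_zero_nat (𝕜 := ℝ)).mul_const (Real.log ‖v‖)

end EuclideanNorm

theorem inv_sqrt_two_smul_fin_two_mem_unitaryGroup {𝕜 : Type*} [RCLike 𝕜] {w : 𝕜} (hw : ‖w‖ = 1) :
    ((√2 : ℝ) : 𝕜)⁻¹ • !![1, 1; w, -w] ∈ Matrix.unitaryGroup (Fin 2) 𝕜 := by
  have conj_mul_self : starRingEnd 𝕜 w * w = 1 := by simp [RCLike.conj_mul, hw]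
  have gram : star !![1, 1; w, -w] * !![1, 1; w, -w] = (2 : 𝕜) • 1 := by
    have star_block : star !![1, 1; w, -w] = !![1, star w; 1, -star w] := by
      ext i j
      fin_cases i <;> fin_cases j <;> simp
    rw [star_block, Matrix.mul_fin_two, Matrix.one_fin_two]
    simp [conj_mul_self, one_add_one_eq_two]
  have sq_sqrt_two : ((√2 : ℝ) : 𝕜) * ((√2 : ℝ) : 𝕜) = 2 := by
    rw [← RCLike.ofReal_mul, Real.mul_self_sqrt zero_le_two, RCLike.ofReal_ofNat]
  rw [Matrix.mem_unitaryGroup_iff', star_smul, smul_mul_smul_comm, gram, star_inv₀,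
    RCLike.star_def, RCLike.conj_ofReal, ← mul_inv, sq_sqrt_two, inv_smul_smul₀ two_ne_zero]

theorem norm_e (k : ℝ) : ‖e k‖ = 1 := by
  have exponent_eq : (2 * Real.pi * Complex.I * k : ℂ) = (2 * Real.pi * k : ℝ) * Complex.I := by
    push_cast; ring
  rw [e, exponent_eq, Complex.norm_exp_ofReal_mul_I]

theorem inv_sqrt_two_smul_RSblock_mem_unitaryGroup (k : ℝ) :
    ((√2 : ℝ) : ℂ)⁻¹ • RSblock k ∈ Matrix.unitaryGroup (Fin 2) ℂ :=
  inv_sqrt_two_smul_fin_two_mem_unitaryGroup (norm_e k)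

theorem inv_sqrt_two_pow_smul_RSprod_mem_unitaryGroup (k : ℝ) (n : ℕ) :
    (((√2 : ℝ) : ℂ) ^ n)⁻¹ • RSprod k n ∈ Matrix.unitaryGroup (Fin 2) ℂ := by
  simpa [RSprod] using pow_length_smul_list_prod_mem
    (Matrix.unitaryGroup (Fin 2) ℂ) ((√2 : ℝ) : ℂ)⁻¹
    ((List.range n).map fun m => RSblock ((2 : ℝ) ^ m * k)).reverse
    (by simp [inv_sqrt_two_smul_RSblock_mem_unitaryGroup])

/-- `(1/√2)·D(k)` is unitary for every `k`, i.e. `‖D(k)v‖ = √2·‖v‖` for all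
`v ∈ ℂ²`; consequently `‖D(2^{n-1}k)⋯D(k)·v‖ = 2^{n/2}·‖v‖` for every `k`, `n ≥ 1` and `v`, and
both Lyapunov exponents of the associated outward cocycle vanish:
`lim (1/n)·log ‖2^{n/2}·(D(2^{n-1}k)⋯D(k))⁻¹ v‖ = 0` for every nonzero `v`. -/
theorem RudinShapiro_block_unitary_and_zero_Lyapunov_exponents :
    (∀ (k : ℝ) (v : EuclideanSpace ℂ (Fin 2)),
      ‖Matrix.toEuclideanCLM (𝕜 := ℂ) (RSblock k) v‖ = Real.sqrt 2 * ‖v‖) ∧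
    (∀ (k : ℝ) (n : ℕ), 1 ≤ n → ∀ v : EuclideanSpace ℂ (Fin 2),
      ‖Matrix.toEuclideanCLM (𝕜 := ℂ) (RSprod k n) v‖ = Real.sqrt 2 ^ n * ‖v‖) ∧
    (∀ (k : ℝ) (v : EuclideanSpace ℂ (Fin 2)), v ≠ 0 →
      Tendsto (fun n : ℕ => (1 / n : ℝ) *
          Real.log ‖(Real.sqrt 2 ^ n : ℝ) •
            Matrix.toEuclideanCLM (𝕜 := ℂ) ((RSprod k n)⁻¹) v‖)
        atTop (nhds 0)) := by
  have sqrt_two_ne_zero : ((√2 : ℝ) : ℂ) ≠ 0 := by simp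
  have norm_sqrt_two : ‖((√2 : ℝ) : ℂ)‖ = √2 := by simp
  refine ⟨fun k v => ?_, fun k n _ v => ?_, fun k v _ => ?_⟩
  · rw [norm_toEuclideanCLM_of_inv_smul_mem_unitaryGroup sqrt_two_ne_zero
      (inv_sqrt_two_smul_RSblock_mem_unitaryGroup k), norm_sqrt_two]
  · rw [norm_toEuclideanCLM_of_inv_smul_mem_unitaryGroup (pow_ne_zero n sqrt_two_ne_zero)
      (inv_sqrt_two_pow_smul_RSprod_mem_unitaryGroup k n), norm_pow, norm_sqrt_two]
  · have smul_inv_mem (n : ℕ) := smul_inv_mem_unitaryGroup (pow_ne_zero n sqrt_two_ne_zero)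
      (inv_sqrt_two_pow_smul_RSprod_mem_unitaryGroup k n)
    simpa only [map_smul, smul_apply, ← Complex.coe_smul, Complex.ofReal_pow]
      using tendsto_one_div_mul_log_norm_of_mem_unitaryGroup smul_inv_mem v
end
end
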